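/- There exists a binary self-dual code of length 68 and minimum (nonzero) weight 12 that has exactly 1274 codewords of weight 12 and exactly 13296 codewords of weight 14 (i.e. a self-dual [68,34,12] code with weight enumerator W_{68,2} with γ = 0 and β = 208). -/

import Mathlib

/-- The dual of a code (submodule of `ι → R`) with respect to the standard bilinear form. -/
def dualCode {R : Type*} [CommRing R] {ι : Type*} [Fintype ι]
    (C : Submodule R (ι → R)) : Submodule R (ι → R) where
  carrier := {x | ∀ c ∈ C, ∑ i, x i * c i = 0}
  add_mem' := by
    intro a b ha hb c hc
    simp only [Set.mem_setOf_eq] at ha hb ⊢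
    simp [Pi.add_apply, add_mul, Finset.sum_add_distrib, ha c hc, hb c hc]
  zero_mem' := by
    intro c hc
    simp
  smul_mem' := by
    intro r a ha c hc
    simp only [Set.mem_setOf_eq] at ha ⊢
    simp [Pi.smul_apply, smul_eq_mul, mul_assoc, ← Finset.mul_sum, ha c hc]

/-- A code is self-dual if it equals its dual. -/
def IsSelfDual {R : Type*} [CommRing R] {ι : Type*} [Fintype ι]
    (C : Submodule R (ι → R)) : Prop :=
  C = dualCode C

def mRows : List ℕ := [9934826022, 3196227469, 5879755610, 10759000373, 4769118635, 8676263126, 172657069, 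
345314138, 939031925, 1380994410, 3127951636, 5764116072, 11047824209, 5298621794, 
10013243012, 2329608521, 4967413011, 13467164754, 9754591396, 2483477129, 4487731538, 
9488064229, 1454508618, 3014938452, 5437420264, 11636068944, 6273826656, 12184799552, 
7189729921, 14379459842, 11492004293, 5978362890, 12188480468, 6703156201]

def tRows : List ℕ := [9934836058, 2689802933, 5379474795, 10758949590, 4338161068, 8676191065, 14226209700, 
14246756466, 14706391006, 13286004871, 2762042146, 8807529299, 7905821084, 4915943701, 
4558970685, 2483774550, 4967418029, 12151726162, 7123714212, 14247297353, 8184393604, 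
5449844005, 7718889308, 10047650178, 9239275816, 13032931142, 16633317814, 10470138966, 
5081956247, 3601016066, 7201901061, 14403802122, 11627866132, 6075863081]

/-- Evaluate `n` to a literal before passing it on (helps kernel evaluation). -/
def force {α : Type} (n : ℕ) (f : ℕ → α) : α :=
  match n with
  | 0 => f 0
  | m + 1 => f (m + 1)

/-- Repunit in base `2^35` with `n` digits. -/
def rep (n : ℕ) : ℕ := (2 ^ (35 * n) - 1) / 34359738367

/-- Add a row to the table of packed subset sums. `e` is the packed list of `k`-subset sums. -/
def stepAux (r : ℕ) : ℕ × ℕ → List (ℕ × ℕ) → List (ℕ × ℕ)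
  | _, [] => []
  | (n, p), (n', p') :: t =>
    force (n' + n) fun m =>
      force (p' + 2 ^ (35 * n') * (p ^^^ (r * rep n))) fun q =>
        (m, q) :: stepAux r (n', p') t

def table (K : ℕ) : List ℕ → List (ℕ × ℕ)
  | [] => (1, 0) :: List.replicate K (0, 0)
  | r :: rs =>
    match table K rs with
    | [] => []
    | e :: t => e :: stepAux r e t

def wsum (q o : ℕ) : ℕ → ℕ
  | 0 => 0
  | j + 1 => wsum q o j + ((q >>> j) &&& o)

/-- Number of entries `y` of the packed list with `b ≤ popc (y ^^^ t)`. -/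
def leaf (b t : ℕ) (e : ℕ × ℕ) : ℕ :=
  force (rep e.1) fun o =>
    force (e.2 ^^^ (t * o)) fun q =>
      (((wsum q o 34 + (64 - b) * o) >>> 6) &&& o) % 34359738367

def outer (b : ℕ) (tab : List (ℕ × ℕ)) : List ℕ → ℕ → ℕ → ℕ
  | [], k, t => leaf b t (tab.getD k (0, 0))
  | _ :: rs, 0, t => outer b tab rs 0 t
  | r :: rs, k + 1, t => outer b tab rs (k + 1) t + outer b tab rs k (t ^^^ r)

def ge (d : ℕ) (l : List ℕ) (k b : ℕ) : ℕ := outer b (table k (l.drop d)) (l.take d) k 0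

theorem force_eq {α : Type} (n : ℕ) (f : ℕ → α) : force n f = f n := by
  cases n <;> rfl

/-- Packing of a list of lanes of 35 bits. -/
def pack : List ℕ → ℕ
  | [] => 0
  | x :: xs => x + 2 ^ 35 * pack xs

theorem pack_append (xs ys : List ℕ) :
    pack (xs ++ ys) = pack xs + 2 ^ (35 * xs.length) * pack ys := by
  induction xs with
  | nil => simp [pack]
  | cons x xs ih =>
    simp only [List.cons_append, pack, ih, List.length_cons, mul_add, pow_add, mul_one]
    ring

theorem rep_eq (xs : List ℕ) : rep xs.length = pack (xs.map fun _ => 1) := by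
  have h : 34359738367 * pack (xs.map fun _ => 1) + 1 = 2 ^ (35 * xs.length) := by
    induction xs with
    | nil => simp [pack]
    | cons x xs ih =>
      simp only [List.map_cons, pack, List.length_cons, mul_add, pow_add, mul_one, ← ih]
      ring
  unfold rep
  rw [← h, Nat.add_sub_cancel]
  exact Nat.mul_div_cancel_left _ (by norm_num)

theorem pack_mul (c : ℕ) (xs : List ℕ) (f : ℕ → ℕ) :
    c * pack (xs.map f) = pack (xs.map fun x => c * f x) := by
  induction xs with
  | nil => simp [pack]
  | cons x xs ih =>
    simp only [List.map_cons, pack, ← ih]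
    ring

theorem pack_const (c : ℕ) (xs : List ℕ) :
    c * pack (xs.map fun _ => 1) = pack (xs.map fun _ => c) := by
  rw [pack_mul]
  simp only [mul_one]

theorem pack_add (xs : List ℕ) (f g : ℕ → ℕ) :
    pack (xs.map f) + pack (xs.map g) = pack (xs.map fun x => f x + g x) := by
  induction xs with
  | nil => simp [pack]
  | cons x xs ih =>
    simp only [List.map_cons, pack, ← ih]
    ring

theorem xor_lane (a b P Q : ℕ) (ha : a < 2 ^ 35) (hb : b < 2 ^ 35) :
    (a + 2 ^ 35 * P) ^^^ (b + 2 ^ 35 * Q) = (a ^^^ b) + 2 ^ 35 * (P ^^^ Q) := by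
  have hab : a ^^^ b < 2 ^ 35 := Nat.xor_lt_two_pow ha hb
  apply Nat.eq_of_testBit_eq
  intro i
  rw [Nat.testBit_xor, add_comm a, add_comm b, add_comm (a ^^^ b),
    Nat.testBit_two_pow_mul_add _ ha, Nat.testBit_two_pow_mul_add _ hb,
    Nat.testBit_two_pow_mul_add _ hab]
  split <;> simp [Nat.testBit_xor]

theorem pack_xor (xs : List ℕ) (f g : ℕ → ℕ) (hf : ∀ x ∈ xs, f x < 2 ^ 35)
    (hg : ∀ x ∈ xs, g x < 2 ^ 35) :
    pack (xs.map f) ^^^ pack (xs.map g) = pack (xs.map fun x => f x ^^^ g x) := by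
  induction xs with
  | nil => simp [pack]
  | cons x xs ih =>
    simp only [List.mem_cons, forall_eq_or_imp] at hf hg
    simp only [List.map_cons, pack, ← ih hf.2 hg.2]
    exact xor_lane _ _ _ _ hf.1 hg.1

theorem shift_lane (a j P Q : ℕ) (ha : a < 2 ^ 35) (hj : j < 35) :
    ((a + 2 ^ 35 * P) >>> j) &&& (1 + 2 ^ 35 * Q)
      = ((a >>> j) &&& 1) + 2 ^ 35 * ((P >>> j) &&& Q) := by
  have h1 : (a >>> j) &&& 1 < 2 ^ 35 := lt_of_le_of_lt Nat.and_le_right (by norm_num)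
  apply Nat.eq_of_testBit_eq
  intro i
  rw [Nat.testBit_and, Nat.testBit_shiftRight, add_comm a, add_comm 1, add_comm (_ &&& 1),
    Nat.testBit_two_pow_mul_add _ ha, Nat.testBit_two_pow_mul_add _ (by norm_num : 1 < 2 ^ 35),
    Nat.testBit_two_pow_mul_add _ h1]
  by_cases hi : i < 35
  · simp only [hi, if_true, Nat.testBit_and, Nat.testBit_shiftRight]
    by_cases h0 : i = 0
    · subst h0
      simp [hj]
    · have : Nat.testBit 1 i = false := by
        apply Nat.testBit_lt_two_pow
        exact Nat.one_lt_two_pow h0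
      simp [this]
  · simp only [hi, if_false, Nat.testBit_and, Nat.testBit_shiftRight]
    have h2 : ¬ (j + i < 35) := by omega
    have h3 : j + i - 35 = j + (i - 35) := by omega
    simp [h2, h3]

theorem pack_shift (xs : List ℕ) (f : ℕ → ℕ) (j : ℕ) (hj : j < 35)
    (hf : ∀ x ∈ xs, f x < 2 ^ 35) :
    (pack (xs.map f) >>> j) &&& pack (xs.map fun _ => 1)
      = pack (xs.map fun x => (f x >>> j) &&& 1) := by
  induction xs with
  | nil => simp [pack]
  | cons x xs ih =>
    simp only [List.mem_cons, forall_eq_or_imp] at hf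
    simp only [List.map_cons, pack, ← ih hf.2]
    exact shift_lane _ _ _ _ hf.1 hj

theorem pack_mod (xs : List ℕ) : pack xs % 34359738367 = xs.sum % 34359738367 := by
  induction xs with
  | nil => simp [pack]
  | cons x xs ih =>
    simp only [pack, List.sum_cons]
    omega

/-- Number of ones among the 34 lowest bits. -/
def popc (y : ℕ) : ℕ := ∑ j ∈ Finset.range 34, (y.testBit j).toNat

theorem shift_and_one (y j : ℕ) : (y >>> j) &&& 1 = (y.testBit j).toNat := by
  rw [Nat.and_one_is_mod, Nat.testBit_eq_decide_div_mod_eq, Nat.shiftRight_eq_div_pow]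
  rcases Nat.mod_two_eq_zero_or_one (y / 2 ^ j) with h | h <;> simp [h]

theorem popc_le (y : ℕ) : popc y ≤ 34 := by
  unfold popc
  calc _ ≤ ∑ j ∈ Finset.range 34, 1 := Finset.sum_le_sum fun j _ => Bool.toNat_le _
    _ = 34 := by simp

theorem wsum_eq (xs : List ℕ) (f : ℕ → ℕ) (hf : ∀ x ∈ xs, f x < 2 ^ 35) (n : ℕ) (hn : n ≤ 35) :
    wsum (pack (xs.map f)) (pack (xs.map fun _ => 1)) n
      = pack (xs.map fun x => ∑ j ∈ Finset.range n, ((f x).testBit j).toNat) := by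
  induction n with
  | zero =>
    have := pack_mul 0 xs (fun _ => 0)
    simp [wsum] at this ⊢
    exact this
  | succ n ih =>
    rw [wsum, ih (by omega), pack_shift _ _ _ (by omega) hf, pack_add]
    simp only [shift_and_one, Finset.sum_range_succ]

theorem lane_ge (w b : ℕ) (hw : w ≤ 34) (hb : b ≤ 34) :
    ((w + (64 - b)) >>> 6) &&& 1 = if b ≤ w then 1 else 0 := by
  rw [Nat.and_one_is_mod, Nat.shiftRight_eq_div_pow]
  split <;> omega

theorem sum_ite_countP (xs : List ℕ) (p : ℕ → Prop) [DecidablePred p] :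
    (xs.map fun x => if p x then 1 else 0).sum = xs.countP (fun x => decide (p x)) := by
  induction xs with
  | nil => simp
  | cons x xs ih =>
    simp only [List.map_cons, List.sum_cons, ih, List.countP_cons]
    by_cases h : p x <;> simp [h, add_comm]

theorem leaf_eq (b t : ℕ) (xs : List ℕ) (hb : b ≤ 34) (ht : t < 2 ^ 35)
    (hxs : ∀ x ∈ xs, x < 2 ^ 35) (hlen : xs.length < 34359738367) :
    leaf b t (xs.length, pack xs) = xs.countP (fun x => decide (b ≤ popc (x ^^^ t))) := by
  have hid : pack xs = pack (xs.map fun x => x) := by simp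
  have hx : ∀ x ∈ xs, x ^^^ t < 2 ^ 35 := fun x h => Nat.xor_lt_two_pow (hxs x h) ht
  simp only [leaf, force_eq]
  rw [rep_eq, pack_const, hid, pack_xor _ _ _ hxs (fun _ _ => ht),
    wsum_eq _ _ hx _ (by norm_num), pack_const, pack_add, pack_shift _ _ _ (by norm_num), pack_mod]
  · have : ∀ x, ((∑ j ∈ Finset.range 34, ((x ^^^ t).testBit j).toNat + (64 - b)) >>> 6) &&& 1
        = if b ≤ popc (x ^^^ t) then 1 else 0 := fun x => by
      exact lane_ge _ _ (popc_le _) hb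
    simp only [this]
    rw [sum_ite_countP xs (fun x => b ≤ popc (x ^^^ t)), Nat.mod_eq_of_lt]
    exact lt_of_le_of_lt List.countP_le_length hlen
  · intro x _
    have := popc_le (x ^^^ t)
    unfold popc at this
    norm_num at this ⊢
    omega

/-- All sums of `k` of the rows. -/
def sums : List ℕ → ℕ → List ℕ
  | _, 0 => [0]
  | [], _ + 1 => []
  | r :: rs, k + 1 => sums rs (k + 1) ++ (sums rs k).map (fun y => y ^^^ r)

theorem sums_zero (l : List ℕ) : sums l 0 = [0] := by cases l <;> rfl

theorem sums_length (l : List ℕ) (k : ℕ) : (sums l k).length = l.length.choose k := by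
  induction l generalizing k with
  | nil => cases k <;> simp [sums]
  | cons r rs ih =>
    cases k with
    | zero => simp [sums]
    | succ k => simp [sums, ih, Nat.choose_succ_succ, add_comm]

theorem sums_lt (l : List ℕ) (hl : ∀ r ∈ l, r < 2 ^ 35) (k : ℕ) : ∀ y ∈ sums l k, y < 2 ^ 35 := by
  induction l generalizing k with
  | nil => cases k <;> simp [sums]
  | cons r rs ih =>
    simp only [List.mem_cons, forall_eq_or_imp] at hl
    cases k with
    | zero => simp [sums]
    | succ k =>
      intro y hy
      simp only [sums, List.mem_append, List.mem_map] at hy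
      rcases hy with hy | ⟨z, hz, rfl⟩
      · exact ih hl.2 _ _ hy
      · exact Nat.xor_lt_two_pow (ih hl.2 _ _ hz) hl.1

/-- The packed form of a list. -/
def pl (xs : List ℕ) : ℕ × ℕ := (xs.length, pack xs)

theorem stepAux_eq (r : ℕ) (rs : List ℕ) (hr : r < 2 ^ 35) (hl : ∀ r ∈ rs, r < 2 ^ 35) (K k : ℕ) :
    stepAux r (pl (sums rs k)) ((List.range' (k + 1) K).map fun i => pl (sums rs i))
      = (List.range' (k + 1) K).map fun i => pl (sums (r :: rs) i) := by
  induction K generalizing k with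
  | zero => simp [stepAux]
  | succ K ih =>
    have h := ih (k + 1)
    simp only [List.range'_succ, List.map_cons]
    rw [← h]
    have hid : pack (sums rs k) = pack ((sums rs k).map fun x => x) := by simp
    have h2 : pack (sums rs k) ^^^ (r * rep (sums rs k).length)
        = pack ((sums rs k).map fun y => y ^^^ r) := by
      rw [rep_eq, pack_const, hid,
        pack_xor _ _ _ (sums_lt rs hl k) (fun _ _ => hr)]
    conv_lhs => simp only [pl, stepAux, force_eq]
    rw [h2]
    simp [pl, sums, pack_append]

theorem table_eq (K : ℕ) (l : List ℕ) (hl : ∀ r ∈ l, r < 2 ^ 35) :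
    table K l = (List.range' 0 (K + 1)).map fun i => pl (sums l i) := by
  induction l with
  | nil =>
    simp only [table, List.range'_succ, List.map_cons]
    congr 1
    symm
    rw [List.eq_replicate_iff]
    refine ⟨by simp, ?_⟩
    intro b hb
    simp only [List.mem_map, List.mem_range'] at hb
    obtain ⟨a, ⟨i, _, rfl⟩, rfl⟩ := hb
    rw [show 0 + 1 + 1 * i = i + 1 by ring]
    rfl
  | cons r rs ih =>
    simp only [List.mem_cons, forall_eq_or_imp] at hl
    have h := stepAux_eq r rs hl.1 hl.2 K 0
    simp only [table, ih hl.2, List.range'_succ, List.map_cons]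
    rw [h]
    simp [sums_zero]

theorem table_getD (K : ℕ) (l : List ℕ) (hl : ∀ r ∈ l, r < 2 ^ 35) (k : ℕ) (hk : k ≤ K) :
    (table K l).getD k (0, 0) = pl (sums l k) := by
  rw [table_eq K l hl]
  simp [List.getD, Nat.lt_succ_of_le hk]

theorem outer_eq (b K : ℕ) (rs l : List ℕ) (hb : b ≤ 34) (hrs : ∀ r ∈ rs, r < 2 ^ 35)
    (hl : ∀ r ∈ l, r < 2 ^ 35) (hlen : rs.length ≤ 34) (k t : ℕ) (hk : k ≤ K) (ht : t < 2 ^ 35) :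
    outer b (table K rs) l k t
      = (sums (l ++ rs) k).countP (fun x => decide (b ≤ popc (x ^^^ t))) := by
  induction l generalizing k t with
  | nil =>
    rw [outer, table_getD K rs hrs k hk, List.nil_append]
    have hlt : (sums rs k).length < 34359738367 := by
      rw [sums_length]
      have h1 := Nat.choose_le_two_pow rs.length k
      have h2 : 2 ^ rs.length ≤ 2 ^ 34 := Nat.pow_le_pow_right (by norm_num) hlen
      norm_num at h2
      omega
    rw [pl, leaf_eq b t _ hb ht (sums_lt rs hrs k) hlt]
  | cons r l ih =>
    simp only [List.mem_cons, forall_eq_or_imp] at hl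
    cases k with
    | zero =>
      rw [outer, ih hl.2 _ _ hk ht, sums_zero, sums_zero]
    | succ k =>
      rw [outer, ih hl.2 _ _ hk ht, ih hl.2 _ _ (by omega) (Nat.xor_lt_two_pow ht hl.1)]
      rw [List.cons_append, sums, List.countP_append, List.countP_map]
      have hh : (fun x => decide (b ≤ popc (x ^^^ (t ^^^ r))))
          = (fun x => decide (b ≤ popc (x ^^^ t))) ∘ (fun y => y ^^^ r) := by
        funext x
        simp only [Function.comp, Nat.xor_assoc, Nat.xor_comm t r]
      rw [hh]

theorem ge_eq (d : ℕ) (l : List ℕ) (k b : ℕ) (hb : b ≤ 34) (hl : ∀ r ∈ l, r < 2 ^ 35)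
    (hlen : l.length ≤ 34) :
    ge d l k b = (sums l k).countP (fun x => decide (b ≤ popc x)) := by
  rw [ge, outer_eq b k _ _ hb (fun r h => hl r (List.mem_of_mem_drop h))
    (fun r h => hl r (List.mem_of_mem_take h)) (by simp; omega) k 0 le_rfl (by norm_num)]
  simp

theorem countP_eq_of_ge (xs : List ℕ) (b m n : ℕ)
    (h1 : xs.countP (fun x => decide (b ≤ popc x)) = m + n)
    (h2 : xs.countP (fun x => decide (b + 1 ≤ popc x)) = n) :
    xs.countP (fun x => decide (popc x = b)) = m := by
  have : xs.countP (fun x => decide (b ≤ popc x))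
      = xs.countP (fun x => decide (popc x = b))
        + xs.countP (fun x => decide (b + 1 ≤ popc x)) := by
    clear h1 h2
    induction xs with
    | nil => simp
    | cons x xs ih =>
      simp only [List.countP_cons, ih, decide_eq_true_eq]
      split_ifs <;> omega
  omega

/-- Bit `j` of `r` as an element of `ZMod 2`. -/
def zbit (r j : ℕ) : ZMod 2 := if r.testBit j then 1 else 0

theorem zbit_xor (a b j : ℕ) : zbit (a ^^^ b) j = zbit a j + zbit b j := by
  unfold zbit
  rw [Nat.testBit_xor]
  cases a.testBit j <;> cases b.testBit j <;> decide

/-- The sum of the rows selected by `x`. -/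
def xsum : (l : List ℕ) → (Fin l.length → ZMod 2) → ℕ
  | [], _ => 0
  | r :: rs, x => xsum rs (fun i => x i.succ) ^^^ (if x 0 = 0 then 0 else r)

theorem zmod2_cases (a : ZMod 2) : a = 0 ∨ a = 1 := by
  revert a; decide

theorem zbit_xsum (l : List ℕ) (x : Fin l.length → ZMod 2) (j : ℕ) :
    zbit (xsum l x) j = ∑ i, x i * zbit (l.getD i 0) j := by
  induction l with
  | nil => simp [xsum, zbit]
  | cons r rs ih =>
    rw [xsum, zbit_xor, ih]
    have h := Fin.sum_univ_succ (n := rs.length) (fun i => x i * zbit ((r :: rs).getD i 0) j)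
    refine Eq.trans ?_ h.symm
    rw [add_comm]
    congr 1
    rcases zmod2_cases (x 0) with h0 | h0
    · have : x (0 : Fin (rs.length + 1)) = 0 := h0
      simp [this, zbit]
    · have : x (0 : Fin (rs.length + 1)) = 1 := h0
      simp [this]

theorem hammingNorm_cons (n : ℕ) (a : ZMod 2) (x : Fin n → ZMod 2) :
    hammingNorm (Fin.cons a x : Fin (n + 1) → ZMod 2) = (if a = 0 then 0 else 1) + hammingNorm x := by
  unfold hammingNorm
  rw [Fin.card_filter_univ_succ]
  by_cases h : a = 0
  · simp [h]
  · simp [h, add_comm]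

theorem card_eq (l : List ℕ) (k : ℕ) (p : ℕ → Prop) [DecidablePred p] :
    (Finset.univ.filter fun x : Fin l.length → ZMod 2 =>
      hammingNorm x = k ∧ p (xsum l x)).card = (sums l k).countP (fun y => decide (p y)) := by
  induction l generalizing k p with
  | nil =>
    have h : ∀ x : Fin ([] : List ℕ).length → ZMod 2, hammingNorm x = 0 := fun x => by
      unfold hammingNorm
      rw [Finset.card_eq_zero, Finset.filter_eq_empty_iff]
      intro i
      exact absurd i.2 (by simp)
    have hc : (Finset.univ : Finset (Fin ([] : List ℕ).length → ZMod 2)).card = 1 := by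
      simp
    cases k with
    | zero =>
      by_cases h0 : p 0 <;> simp [h, xsum, sums, h0]
    | succ k => simp [h, sums]
  | cons r rs ih =>
    have key : (Finset.univ.filter fun x : Fin (r :: rs).length → ZMod 2 =>
          hammingNorm x = k ∧ p (xsum (r :: rs) x)).card
        = (Finset.univ.filter fun x : Fin rs.length → ZMod 2 =>
            hammingNorm x = k ∧ p (xsum rs x)).card
          + (Finset.univ.filter fun x : Fin rs.length → ZMod 2 =>
            1 + hammingNorm x = k ∧ p (xsum rs x ^^^ r)).card := by
      simp only [Finset.card_filter]
      have e := (Fin.consEquiv (n := rs.length) (fun _ => ZMod 2)).sum_comp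
        (fun x => if hammingNorm x = k ∧ p (xsum (r :: rs) x) then 1 else 0)
      refine Eq.trans e.symm ?_
      rw [Fintype.sum_prod_type]
      refine (Fin.sum_univ_two (fun a : ZMod 2 => _)).trans ?_
      congr 1
      · refine Finset.sum_congr rfl fun x _ => ?_
        have h1 : hammingNorm (Fin.cons (0 : ZMod 2) x : Fin (rs.length + 1) → ZMod 2)
          = hammingNorm x := by rw [hammingNorm_cons]; simp
        have h2 : xsum (r :: rs) (Fin.cons (0 : ZMod 2) x : Fin (rs.length + 1) → ZMod 2)
          = xsum rs x := by simp [xsum]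
        change (if hammingNorm (Fin.cons (0 : ZMod 2) x : Fin (rs.length + 1) → ZMod 2) = k ∧
          p (xsum (r :: rs) (Fin.cons (0 : ZMod 2) x : Fin (rs.length + 1) → ZMod 2))
          then 1 else 0) = _
        rw [h1, h2]
      · refine Finset.sum_congr rfl fun x _ => ?_
        have h1 : hammingNorm (Fin.cons (1 : ZMod 2) x : Fin (rs.length + 1) → ZMod 2)
          = 1 + hammingNorm x := by rw [hammingNorm_cons]; simp
        have h2 : xsum (r :: rs) (Fin.cons (1 : ZMod 2) x : Fin (rs.length + 1) → ZMod 2)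
          = xsum rs x ^^^ r := by simp [xsum]
        change (if hammingNorm (Fin.cons (1 : ZMod 2) x : Fin (rs.length + 1) → ZMod 2) = k ∧
          p (xsum (r :: rs) (Fin.cons (1 : ZMod 2) x : Fin (rs.length + 1) → ZMod 2))
          then 1 else 0) = _
        rw [h1, h2]
    rw [key, ih k p]
    cases k with
    | zero =>
      rw [sums_zero, sums_zero]
      simp
    | succ k =>
      have h3 : ∀ x : Fin rs.length → ZMod 2, (1 + hammingNorm x = k + 1) = (hammingNorm x = k) :=
        fun x => by rw [add_comm]; simp
      simp only [h3]
      rw [ih k (fun y => p (y ^^^ r)), sums, List.countP_append, List.countP_map]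
      rfl

/-- The matrix with the given rows. -/
def mat (l : List ℕ) (i j : Fin 34) : ZMod 2 := zbit (l.getD i 0) j

/-- Row vector times matrix. -/
def vm (l : List ℕ) (x : Fin 34 → ZMod 2) (j : Fin 34) : ZMod 2 := ∑ i, x i * mat l i j

theorem popc_eq (y : ℕ) : popc y = hammingNorm (fun j : Fin 34 => zbit y j) := by
  unfold popc hammingNorm
  rw [Finset.card_filter, Finset.sum_range]
  refine Finset.sum_congr rfl fun j _ => ?_
  unfold zbit
  by_cases h : y.testBit j = true <;> simp [h]

theorem card_vm (l : List ℕ) (hl : l.length = 34) (k b : ℕ) :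
    (Finset.univ.filter fun x : Fin 34 → ZMod 2 =>
      hammingNorm x = k ∧ hammingNorm (vm l x) = b).card
      = (sums l k).countP (fun y => decide (popc y = b)) := by
  rw [← card_eq l k (fun y => popc y = b)]
  have h : ∀ n (_ : l.length = n),
    (Finset.univ.filter fun x : Fin n → ZMod 2 => hammingNorm x = k ∧
      hammingNorm (fun j : Fin 34 => ∑ i, x i * zbit (l.getD i 0) j) = b).card
    = (Finset.univ.filter fun x : Fin l.length → ZMod 2 =>
      hammingNorm x = k ∧ popc (xsum l x) = b).card := by
    rintro n rfl
    simp only [popc_eq, zbit_xsum]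
  exact h 34 hl

set_option maxRecDepth 100000

theorem m_ge_0 :
    ge 0 mRows 0 12 = 0 ∧
    ge 0 mRows 0 13 = 0 ∧
    ge 0 mRows 0 14 = 0 ∧
    ge 0 mRows 0 15 = 0 := by
  decide +kernel

theorem m_ge_1 :
    ge 0 mRows 1 11 = 34 ∧
    ge 0 mRows 1 12 = 34 ∧
    ge 0 mRows 1 13 = 34 ∧
    ge 0 mRows 1 14 = 14 := by
  decide +kernel

theorem m_ge_2 :
    ge 0 mRows 2 10 = 561 ∧
    ge 0 mRows 2 11 = 518 ∧
    ge 0 mRows 2 12 = 518 ∧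
    ge 0 mRows 2 13 = 518 := by
  decide +kernel

theorem m_ge_3 :
    ge 0 mRows 3 9 = 5984 ∧
    ge 0 mRows 3 10 = 5984 ∧
    ge 0 mRows 3 11 = 5984 ∧
    ge 0 mRows 3 12 = 5652 := by
  decide +kernel

theorem m_ge_4 :
    ge 0 mRows 4 8 = 46376 ∧
    ge 0 mRows 4 9 = 46137 ∧
    ge 0 mRows 4 10 = 46137 ∧
    ge 0 mRows 4 11 = 46137 := by
  decide +kernel

theorem m_ge_5 :
    ge 0 mRows 5 7 = 278256 ∧
    ge 0 mRows 5 8 = 278256 ∧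
    ge 0 mRows 5 9 = 278256 ∧
    ge 0 mRows 5 10 = 275064 := by
  decide +kernel

theorem m_ge_6 :
    ge 6 mRows 6 6 = 1344904 ∧
    ge 6 mRows 6 7 = 1344180 ∧
    ge 6 mRows 6 8 = 1344180 ∧
    ge 6 mRows 6 9 = 1344180 := by
  decide +kernel

theorem t_ge_0 :
    ge 0 tRows 0 12 = 0 ∧
    ge 0 tRows 0 13 = 0 ∧
    ge 0 tRows 0 14 = 0 ∧
    ge 0 tRows 0 15 = 0 := by
  decide +kernel

theorem t_ge_1 :
    ge 0 tRows 1 11 = 34 ∧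
    ge 0 tRows 1 12 = 34 ∧
    ge 0 tRows 1 13 = 34 ∧
    ge 0 tRows 1 14 = 12 := by
  decide +kernel

theorem t_ge_2 :
    ge 0 tRows 2 10 = 561 ∧
    ge 0 tRows 2 11 = 514 ∧
    ge 0 tRows 2 12 = 514 ∧
    ge 0 tRows 2 13 = 514 := by
  decide +kernel

theorem t_ge_3 :
    ge 0 tRows 3 9 = 5984 ∧
    ge 0 tRows 3 10 = 5984 ∧
    ge 0 tRows 3 11 = 5984 ∧
    ge 0 tRows 3 12 = 5660 := by
  decide +kernel

theorem t_ge_4 :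
    ge 0 tRows 4 8 = 46376 ∧
    ge 0 tRows 4 9 = 46155 ∧
    ge 0 tRows 4 10 = 46155 ∧
    ge 0 tRows 4 11 = 46155 := by
  decide +kernel

theorem t_ge_5 :
    ge 0 tRows 5 7 = 278256 ∧
    ge 0 tRows 5 8 = 278256 ∧
    ge 0 tRows 5 9 = 278256 ∧
    ge 0 tRows 5 10 = 274974 := by
  decide +kernel

theorem t_ge_6 :
    ge 6 tRows 6 8 = 1344180 ∧
    ge 6 tRows 6 9 = 1344180 := by
  decide +kernel

/-- Packed subset sums of the last 24 rows. -/
def tab7 : List (ℕ × ℕ) := table 7 (mRows.drop 10)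

theorem m_chunk_0 :
    outer 7 tab7 [3196227469, 5879755610, 10759000373, 4769118635, 8676263126, 172657069, 345314138, 939031925, 1380994410] 6 9934826022 = 1107568 ∧
    outer 8 tab7 [3196227469, 5879755610, 10759000373, 4769118635, 8676263126, 172657069, 345314138, 939031925, 1380994410] 6 9934826022 = 1106301 := by
  decide +kernel

theorem m_chunk_1 :
    outer 7 tab7 [5879755610, 10759000373, 4769118635, 8676263126, 172657069, 345314138, 939031925, 1380994410] 6 3196227469 = 906192 ∧
    outer 8 tab7 [5879755610, 10759000373, 4769118635, 8676263126, 172657069, 345314138, 939031925, 1380994410] 6 3196227469 = 905180 := by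
  decide +kernel

theorem m_chunk_2 :
    outer 7 tab7 [10759000373, 4769118635, 8676263126, 172657069, 345314138, 939031925, 1380994410] 6 5879755610 = 736281 ∧
    outer 8 tab7 [10759000373, 4769118635, 8676263126, 172657069, 345314138, 939031925, 1380994410] 6 5879755610 = 735461 := by
  decide +kernel

theorem m_chunk_3 :
    outer 7 tab7 [4769118635, 8676263126, 172657069, 345314138, 939031925, 1380994410] 6 10759000373 = 593775 ∧
    outer 8 tab7 [4769118635, 8676263126, 172657069, 345314138, 939031925, 1380994410] 6 10759000373 = 593074 := by
  decide +kernel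

theorem m_chunk_4 :
    outer 7 tab7 [8676263126, 172657069, 345314138, 939031925, 1380994410] 6 4769118635 = 475020 ∧
    outer 8 tab7 [8676263126, 172657069, 345314138, 939031925, 1380994410] 6 4769118635 = 474456 := by
  decide +kernel

theorem m_chunk_5 :
    outer 7 tab7 [172657069, 345314138, 939031925, 1380994410] 6 8676263126 = 376740 ∧
    outer 8 tab7 [172657069, 345314138, 939031925, 1380994410] 6 8676263126 = 376309 := by
  decide +kernel

theorem m_chunk_6 :
    outer 7 tab7 [345314138, 939031925, 1380994410] 6 172657069 = 296010 ∧
    outer 8 tab7 [345314138, 939031925, 1380994410] 6 172657069 = 295688 := by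
  decide +kernel

theorem m_chunk_7 :
    outer 7 tab7 [345314138, 939031925, 1380994410] 7 0 = 888030 ∧
    outer 8 tab7 [345314138, 939031925, 1380994410] 7 0 = 887023 := by
  decide +kernel

theorem outer_split (b : ℕ) (tab : List (ℕ × ℕ)) (r : ℕ) (rs : List ℕ) (k : ℕ) :
    outer b tab (r :: rs) (k + 1) 0 = outer b tab rs (k + 1) 0 + outer b tab rs k r := by
  rw [outer, Nat.zero_xor]

theorem m_ge_7 : ge 10 mRows 7 7 = 5379616 ∧ ge 10 mRows 7 8 = 5373492 := by
  have h : ∀ b, ge 10 mRows 7 b = outer b tab7 [9934826022, 3196227469, 5879755610, 10759000373, 4769118635, 8676263126, 172657069, 345314138, 939031925, 1380994410] 7 0 := fun _ => rfl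
  have split (b r rs) := outer_split b tab7 r rs 6
  norm_num only at split
  constructor
  · rw [h, split, split, split, split, split, split, split,
      m_chunk_7.1, m_chunk_6.1, m_chunk_5.1, m_chunk_4.1, m_chunk_3.1, m_chunk_2.1, m_chunk_1.1, m_chunk_0.1]
  · rw [h, split, split, split, split, split, split, split,
      m_chunk_7.2, m_chunk_6.2, m_chunk_5.2, m_chunk_4.2, m_chunk_3.2, m_chunk_2.2, m_chunk_1.2, m_chunk_0.2]

theorem mRows_lt : ∀ r ∈ mRows, r < 2 ^ 35 := by decide +kernel

theorem tRows_lt : ∀ r ∈ tRows, r < 2 ^ 35 := by decide +kernel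

/-- The number of vectors of weight `k` whose image has weight `b`. -/
def cnt (l : List ℕ) (k b : ℕ) : ℕ :=
  (Finset.univ.filter fun x : Fin 34 → ZMod 2 =>
    hammingNorm x = k ∧ hammingNorm (vm l x) = b).card

theorem cnt_of_ge (d : ℕ) (l : List ℕ) (hl : ∀ r ∈ l, r < 2 ^ 35) (hlen : l.length = 34)
    (s k b b' m g n : ℕ) (hsk : s - k = b) (hb : b < 34) (hb' : b' = b + 1) (hg : g = m + n) (h1 : ge d l k b = g)
    (h2 : ge d l k b' = n) : cnt l k (s - k) = m := by
  rw [hsk]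
  subst hb' hg
  rw [ge_eq d l k _ (by omega) hl hlen.le] at h1 h2
  rw [cnt, card_vm l hlen]
  exact countP_eq_of_ge _ b m n h1 h2

theorem min_of_ge (d : ℕ) (l : List ℕ) (hl : ∀ r ∈ l, r < 2 ^ 35) (hlen : l.length = 34)
    (k b : ℕ) (hb : b < 34) (h1 : ge d l k b = Nat.choose 34 k) (x : Fin 34 → ZMod 2)
    (hx : hammingNorm x = k) : b ≤ hammingNorm (vm l x) := by
  by_contra hlt
  rw [ge_eq d l k _ (by omega) hl hlen.le, ← hlen, ← sums_length, List.countP_eq_length] at h1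
  have h2 := card_vm l hlen k (hammingNorm (vm l x))
  have h3 : (sums l k).countP (fun y => decide (popc y = hammingNorm (vm l x))) = 0 := by
    rw [List.countP_eq_zero]
    intro y hy
    have := h1 y hy
    simp only [decide_eq_true_eq] at this ⊢
    omega
  rw [h3, Finset.card_eq_zero, Finset.filter_eq_empty_iff] at h2
  exact h2 (Finset.mem_univ x) ⟨hx, rfl⟩

theorem mt_rows : ∀ i : Fin 34, xsum tRows (fun k => zbit (mRows.getD i 0) k) = 2 ^ (i : ℕ) := by
  decide +kernel

theorem tm_rows : ∀ i : Fin 34, xsum mRows (fun k => zbit (tRows.getD i 0) k) = 2 ^ (i : ℕ) := by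
  decide +kernel

theorem transpose_bits : ∀ i j : Fin 34,
    (tRows.getD i 0).testBit j = (mRows.getD j 0).testBit i := by
  decide +kernel

theorem mat_transpose (i j : Fin 34) : mat tRows i j = mat mRows j i := by
  unfold mat zbit
  rw [transpose_bits]

theorem zbit_two_pow (i j : Fin 34) : zbit (2 ^ (i : ℕ)) j = if i = j then 1 else 0 := by
  unfold zbit
  rw [Nat.testBit_two_pow]
  simp [Fin.ext_iff]

theorem mat_mt (i j : Fin 34) : ∑ k, mat mRows i k * mat tRows k j = if i = j then 1 else 0 := by
  rw [← zbit_two_pow, ← mt_rows i, zbit_xsum]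
  rfl

theorem mat_tm (i j : Fin 34) : ∑ k, mat tRows i k * mat mRows k j = if i = j then 1 else 0 := by
  rw [← zbit_two_pow, ← tm_rows i, zbit_xsum]
  rfl

theorem vm_vm (l l' : List ℕ)
    (h : ∀ i j, ∑ k, mat l i k * mat l' k j = if i = j then 1 else 0) (x : Fin 34 → ZMod 2) :
    vm l' (vm l x) = x := by
  funext j
  unfold vm
  simp only [Finset.sum_mul]
  rw [Finset.sum_comm]
  simp only [mul_assoc, ← Finset.mul_sum, h]
  simp

theorem vm_tm (x : Fin 34 → ZMod 2) : vm tRows (vm mRows x) = x := vm_vm _ _ mat_mt x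

theorem vm_mt (x : Fin 34 → ZMod 2) : vm mRows (vm tRows x) = x := vm_vm _ _ mat_tm x

theorem vm_adj (x z : Fin 34 → ZMod 2) :
    ∑ j, vm mRows x j * z j = ∑ i, x i * vm tRows z i := by
  unfold vm
  simp only [Finset.sum_mul, Finset.mul_sum]
  rw [Finset.sum_comm]
  refine Finset.sum_congr rfl fun i _ => Finset.sum_congr rfl fun j _ => ?_
  rw [mat_transpose]
  ring

theorem vm_add (l : List ℕ) (x y : Fin 34 → ZMod 2) (j : Fin 34) :
    vm l (fun i => x i + y i) j = vm l x j + vm l y j := by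
  simp [vm, add_mul, Finset.sum_add_distrib]

theorem vm_smul (l : List ℕ) (c : ZMod 2) (x : Fin 34 → ZMod 2) (j : Fin 34) :
    vm l (fun i => c * x i) j = c * vm l x j := by
  simp [vm, Finset.mul_sum, mul_assoc]

/-- Left half of a vector. -/
def lft (v : Fin 68 → ZMod 2) (i : Fin 34) : ZMod 2 := v (Fin.castAdd 34 i)

/-- Right half of a vector. -/
def rgt (v : Fin 68 → ZMod 2) (i : Fin 34) : ZMod 2 := v (Fin.natAdd 34 i)

/-- Glue two halves. -/
def glue (x y : Fin 34 → ZMod 2) : Fin 68 → ZMod 2 := Fin.append x y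

theorem lft_glue (x y : Fin 34 → ZMod 2) : lft (glue x y) = x := by
  funext i
  exact Fin.append_left x y i

theorem rgt_glue (x y : Fin 34 → ZMod 2) : rgt (glue x y) = y := by
  funext i
  exact Fin.append_right x y i

theorem glue_halves (v : Fin 68 → ZMod 2) : glue (lft v) (rgt v) = v :=
  Fin.append_castAdd_natAdd (m := 34) (n := 34) (f := v)

theorem sum_halves (f : Fin 68 → ZMod 2) : ∑ i, f i = ∑ i, lft f i + ∑ i, rgt f i :=
  Fin.sum_univ_add (a := 34) (b := 34) f

theorem norm_halves (v : Fin 68 → ZMod 2) :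
    hammingNorm v = hammingNorm (lft v) + hammingNorm (rgt v) := by
  unfold hammingNorm
  simp only [Finset.card_filter]
  exact Fin.sum_univ_add (a := 34) (b := 34) (fun i => if v i ≠ 0 then 1 else 0)

/-- The code. -/
def theCode : Submodule (ZMod 2) (Fin 68 → ZMod 2) where
  carrier := {v | rgt v = vm mRows (lft v)}
  add_mem' := by
    intro a b ha hb
    simp only [Set.mem_setOf_eq] at ha hb ⊢
    funext j
    have h := vm_add mRows (lft a) (lft b) j
    rw [← ha, ← hb] at h
    exact h.symm
  zero_mem' := by
    funext j
    simp [rgt, vm, lft]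
  smul_mem' := by
    intro c a ha
    simp only [Set.mem_setOf_eq] at ha ⊢
    funext j
    have h := vm_smul mRows c (lft a) j
    rw [← ha] at h
    exact h.symm

theorem mem_code (v : Fin 68 → ZMod 2) : v ∈ theCode ↔ rgt v = vm mRows (lft v) := Iff.rfl

theorem dot_halves (u v : Fin 68 → ZMod 2) :
    ∑ i, u i * v i = ∑ i, lft u i * lft v i + ∑ i, rgt u i * rgt v i :=
  sum_halves (fun i => u i * v i)

theorem code_selfDual : IsSelfDual theCode := by
  unfold IsSelfDual
  ext v
  constructor
  · intro hv c hc
    rw [mem_code] at hv hc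
    rw [dot_halves, hv, hc, vm_adj, vm_tm]
    exact CharTwo.add_self_eq_zero _
  · intro hv
    have h : ∀ e : Fin 34 → ZMod 2, ∑ i, e i * (lft v i + vm tRows (rgt v) i) = 0 := by
      intro e
      have h1 := hv (glue e (vm mRows e)) (by rw [mem_code, lft_glue, rgt_glue])
      rw [dot_halves, lft_glue, rgt_glue] at h1
      have h2 := vm_adj e (rgt v)
      simp only [mul_comm (lft v _), mul_comm (rgt v _)] at h1
      simp only [mul_add, Finset.sum_add_distrib]
      rw [← h2, h1]
    have h3 : lft v = vm tRows (rgt v) := by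
      funext i
      have h4 := h (Pi.single i 1)
      simp only [Pi.single_apply, ite_mul, one_mul, zero_mul, Finset.sum_ite_eq',
        Finset.mem_univ, if_true] at h4
      exact CharTwo.add_eq_zero.mp h4
    rw [mem_code, h3, vm_mt]

theorem card_small (l : List ℕ) (s h : ℕ) (hs : h ≤ s + 1) :
    (Finset.univ.filter fun x : Fin 34 → ZMod 2 =>
      hammingNorm x + hammingNorm (vm l x) = s ∧ hammingNorm x < h).card
      = ∑ a ∈ Finset.range h, cnt l a (s - a) := by
  rw [Finset.card_eq_sum_card_fiberwise (f := fun x => hammingNorm x) (t := Finset.range h)]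
  · refine Finset.sum_congr rfl fun a ha => ?_
    rw [Finset.mem_range] at ha
    unfold cnt
    rw [Finset.filter_filter]
    refine congrArg Finset.card ?_
    ext x
    simp only [Finset.mem_filter, Finset.mem_univ, true_and]
    omega
  · intro x hx
    simp only [Finset.coe_filter, Set.mem_setOf_eq, Finset.mem_univ, true_and] at hx
    simpa using hx.2

theorem card_total (s h h' : ℕ) (hs : h ≤ s + 1) (hh : h' = s + 1 - h) :
    (Finset.univ.filter fun x : Fin 34 → ZMod 2 =>
      hammingNorm x + hammingNorm (vm mRows x) = s).card
      = ∑ a ∈ Finset.range h, cnt mRows a (s - a)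
        + ∑ a ∈ Finset.range h', cnt tRows a (s - a) := by
  subst hh
  rw [← card_small mRows s h hs, ← card_small tRows s (s + 1 - h) (by omega),
    ← Finset.card_filter_add_card_filter_not (fun x => hammingNorm x < h),
    Finset.filter_filter, Finset.filter_filter]
  refine congrArg₂ (· + ·) rfl ?_
  refine Finset.card_bij' (fun x _ => vm mRows x) (fun y _ => vm tRows y) ?_ ?_ ?_ ?_
  · intro x hx
    simp only [Finset.mem_filter, Finset.mem_univ, true_and] at hx ⊢
    rw [vm_tm]
    omega
  · intro y hy
    simp only [Finset.mem_filter, Finset.mem_univ, true_and] at hy ⊢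
    rw [vm_mt]
    omega
  · intro x _
    exact vm_tm x
  · intro y _
    exact vm_mt y

theorem ncard_code (s : ℕ) :
    {v | v ∈ theCode ∧ hammingNorm v = s}.ncard
      = (Finset.univ.filter fun x : Fin 34 → ZMod 2 =>
        hammingNorm x + hammingNorm (vm mRows x) = s).card := by
  have h : {v | v ∈ theCode ∧ hammingNorm v = s}
      = (fun x => glue x (vm mRows x)) '' (Finset.univ.filter fun x : Fin 34 → ZMod 2 =>
        hammingNorm x + hammingNorm (vm mRows x) = s : Finset (Fin 34 → ZMod 2)) := by
    ext v
    simp only [Set.mem_setOf_eq, Set.mem_image, Finset.coe_filter, Finset.mem_univ, true_and]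
    constructor
    · rintro ⟨h1, h2⟩
      rw [mem_code] at h1
      rw [norm_halves, h1] at h2
      exact ⟨lft v, h2, by rw [← h1, glue_halves]⟩
    · rintro ⟨x, h1, rfl⟩
      rw [mem_code, norm_halves, lft_glue, rgt_glue]
      exact ⟨rfl, h1⟩
  rw [h, Set.ncard_image_of_injective, Set.ncard_coe_finset]
  intro x y hxy
  have := congrArg lft hxy
  simpa only [lft_glue] using this

theorem sum_6 (f : ℕ → ℕ) (c0 c1 c2 c3 c4 c5 : ℕ)
    (h0 : f 0 = c0) (h1 : f 1 = c1) (h2 : f 2 = c2) (h3 : f 3 = c3)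
    (h4 : f 4 = c4) (h5 : f 5 = c5) :
    ∑ a ∈ Finset.range 6, f a = c0 + c1 + c2 + c3 + c4 + c5 := by
  simp only [Finset.sum_range_succ, Finset.sum_range_zero, zero_add, h0, h1, h2, h3, h4, h5]

theorem sum_7 (f : ℕ → ℕ) (c0 c1 c2 c3 c4 c5 c6 : ℕ)
    (h0 : f 0 = c0) (h1 : f 1 = c1) (h2 : f 2 = c2) (h3 : f 3 = c3)
    (h4 : f 4 = c4) (h5 : f 5 = c5) (h6 : f 6 = c6) :
    ∑ a ∈ Finset.range 7, f a = c0 + c1 + c2 + c3 + c4 + c5 + c6 := by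
  simp only [Finset.sum_range_succ, Finset.sum_range_zero, zero_add, h0, h1, h2, h3, h4, h5, h6]

theorem sum_8 (f : ℕ → ℕ) (c0 c1 c2 c3 c4 c5 c6 c7 : ℕ)
    (h0 : f 0 = c0) (h1 : f 1 = c1) (h2 : f 2 = c2) (h3 : f 3 = c3)
    (h4 : f 4 = c4) (h5 : f 5 = c5) (h6 : f 6 = c6) (h7 : f 7 = c7) :
    ∑ a ∈ Finset.range 8, f a = c0 + c1 + c2 + c3 + c4 + c5 + c6 + c7 := by
  simp only [Finset.sum_range_succ, Finset.sum_range_zero, zero_add, h0, h1, h2, h3, h4, h5, h6, h7]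

theorem card_12 :
    {v | v ∈ theCode ∧ hammingNorm v = 12}.ncard = 1274 := by
  have m0 : cnt mRows 0 (12 - 0) = 0 :=
    cnt_of_ge 0 mRows mRows_lt rfl 12 0 12 13 0 0 0 (by norm_num) (by norm_num)
      (by norm_num) (by norm_num) m_ge_0.1 m_ge_0.2.1
  have m1 : cnt mRows 1 (12 - 1) = 0 :=
    cnt_of_ge 0 mRows mRows_lt rfl 12 1 11 12 0 34 34 (by norm_num) (by norm_num)
      (by norm_num) (by norm_num) m_ge_1.1 m_ge_1.2.1
  have m2 : cnt mRows 2 (12 - 2) = 43 :=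
    cnt_of_ge 0 mRows mRows_lt rfl 12 2 10 11 43 561 518 (by norm_num) (by norm_num)
      (by norm_num) (by norm_num) m_ge_2.1 m_ge_2.2.1
  have m3 : cnt mRows 3 (12 - 3) = 0 :=
    cnt_of_ge 0 mRows mRows_lt rfl 12 3 9 10 0 5984 5984 (by norm_num) (by norm_num)
      (by norm_num) (by norm_num) m_ge_3.1 m_ge_3.2.1
  have m4 : cnt mRows 4 (12 - 4) = 239 :=
    cnt_of_ge 0 mRows mRows_lt rfl 12 4 8 9 239 46376 46137 (by norm_num) (by norm_num)
      (by norm_num) (by norm_num) m_ge_4.1 m_ge_4.2.1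
  have m5 : cnt mRows 5 (12 - 5) = 0 :=
    cnt_of_ge 0 mRows mRows_lt rfl 12 5 7 8 0 278256 278256 (by norm_num) (by norm_num)
      (by norm_num) (by norm_num) m_ge_5.1 m_ge_5.2.1
  have m6 : cnt mRows 6 (12 - 6) = 724 :=
    cnt_of_ge 6 mRows mRows_lt rfl 12 6 6 7 724 1344904 1344180 (by norm_num) (by norm_num)
      (by norm_num) (by norm_num) m_ge_6.1 m_ge_6.2.1
  have t0 : cnt tRows 0 (12 - 0) = 0 :=
    cnt_of_ge 0 tRows tRows_lt rfl 12 0 12 13 0 0 0 (by norm_num) (by norm_num)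
      (by norm_num) (by norm_num) t_ge_0.1 t_ge_0.2.1
  have t1 : cnt tRows 1 (12 - 1) = 0 :=
    cnt_of_ge 0 tRows tRows_lt rfl 12 1 11 12 0 34 34 (by norm_num) (by norm_num)
      (by norm_num) (by norm_num) t_ge_1.1 t_ge_1.2.1
  have t2 : cnt tRows 2 (12 - 2) = 47 :=
    cnt_of_ge 0 tRows tRows_lt rfl 12 2 10 11 47 561 514 (by norm_num) (by norm_num)
      (by norm_num) (by norm_num) t_ge_2.1 t_ge_2.2.1
  have t3 : cnt tRows 3 (12 - 3) = 0 :=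
    cnt_of_ge 0 tRows tRows_lt rfl 12 3 9 10 0 5984 5984 (by norm_num) (by norm_num)
      (by norm_num) (by norm_num) t_ge_3.1 t_ge_3.2.1
  have t4 : cnt tRows 4 (12 - 4) = 221 :=
    cnt_of_ge 0 tRows tRows_lt rfl 12 4 8 9 221 46376 46155 (by norm_num) (by norm_num)
      (by norm_num) (by norm_num) t_ge_4.1 t_ge_4.2.1
  have t5 : cnt tRows 5 (12 - 5) = 0 :=
    cnt_of_ge 0 tRows tRows_lt rfl 12 5 7 8 0 278256 278256 (by norm_num) (by norm_num)
      (by norm_num) (by norm_num) t_ge_5.1 t_ge_5.2.1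
  have em := sum_7 (fun a => cnt mRows a (12 - a)) _ _ _ _ _ _ _
    m0 m1 m2 m3 m4 m5 m6
  have et := sum_6 (fun a => cnt tRows a (12 - a)) _ _ _ _ _ _
    t0 t1 t2 t3 t4 t5
  have e := card_total 12 7 6 (by norm_num) (by norm_num)
  rw [em, et] at e
  exact (ncard_code 12).trans e

theorem card_14 :
    {v | v ∈ theCode ∧ hammingNorm v = 14}.ncard = 13296 := by
  have m0 : cnt mRows 0 (14 - 0) = 0 :=
    cnt_of_ge 0 mRows mRows_lt rfl 14 0 14 15 0 0 0 (by norm_num) (by norm_num)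
      (by norm_num) (by norm_num) m_ge_0.2.2.1 m_ge_0.2.2.2
  have m1 : cnt mRows 1 (14 - 1) = 20 :=
    cnt_of_ge 0 mRows mRows_lt rfl 14 1 13 14 20 34 14 (by norm_num) (by norm_num)
      (by norm_num) (by norm_num) m_ge_1.2.2.1 m_ge_1.2.2.2
  have m2 : cnt mRows 2 (14 - 2) = 0 :=
    cnt_of_ge 0 mRows mRows_lt rfl 14 2 12 13 0 518 518 (by norm_num) (by norm_num)
      (by norm_num) (by norm_num) m_ge_2.2.2.1 m_ge_2.2.2.2
  have m3 : cnt mRows 3 (14 - 3) = 332 :=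
    cnt_of_ge 0 mRows mRows_lt rfl 14 3 11 12 332 5984 5652 (by norm_num) (by norm_num)
      (by norm_num) (by norm_num) m_ge_3.2.2.1 m_ge_3.2.2.2
  have m4 : cnt mRows 4 (14 - 4) = 0 :=
    cnt_of_ge 0 mRows mRows_lt rfl 14 4 10 11 0 46137 46137 (by norm_num) (by norm_num)
      (by norm_num) (by norm_num) m_ge_4.2.2.1 m_ge_4.2.2.2
  have m5 : cnt mRows 5 (14 - 5) = 3192 :=
    cnt_of_ge 0 mRows mRows_lt rfl 14 5 9 10 3192 278256 275064 (by norm_num) (by norm_num)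
      (by norm_num) (by norm_num) m_ge_5.2.2.1 m_ge_5.2.2.2
  have m6 : cnt mRows 6 (14 - 6) = 0 :=
    cnt_of_ge 6 mRows mRows_lt rfl 14 6 8 9 0 1344180 1344180 (by norm_num) (by norm_num)
      (by norm_num) (by norm_num) m_ge_6.2.2.1 m_ge_6.2.2.2
  have m7 : cnt mRows 7 (14 - 7) = 6124 :=
    cnt_of_ge 10 mRows mRows_lt rfl 14 7 7 8 6124 5379616 5373492 (by norm_num) (by norm_num)
      (by norm_num) (by norm_num) m_ge_7.1 m_ge_7.2
  have t0 : cnt tRows 0 (14 - 0) = 0 :=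
    cnt_of_ge 0 tRows tRows_lt rfl 14 0 14 15 0 0 0 (by norm_num) (by norm_num)
      (by norm_num) (by norm_num) t_ge_0.2.2.1 t_ge_0.2.2.2
  have t1 : cnt tRows 1 (14 - 1) = 22 :=
    cnt_of_ge 0 tRows tRows_lt rfl 14 1 13 14 22 34 12 (by norm_num) (by norm_num)
      (by norm_num) (by norm_num) t_ge_1.2.2.1 t_ge_1.2.2.2
  have t2 : cnt tRows 2 (14 - 2) = 0 :=
    cnt_of_ge 0 tRows tRows_lt rfl 14 2 12 13 0 514 514 (by norm_num) (by norm_num)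
      (by norm_num) (by norm_num) t_ge_2.2.2.1 t_ge_2.2.2.2
  have t3 : cnt tRows 3 (14 - 3) = 324 :=
    cnt_of_ge 0 tRows tRows_lt rfl 14 3 11 12 324 5984 5660 (by norm_num) (by norm_num)
      (by norm_num) (by norm_num) t_ge_3.2.2.1 t_ge_3.2.2.2
  have t4 : cnt tRows 4 (14 - 4) = 0 :=
    cnt_of_ge 0 tRows tRows_lt rfl 14 4 10 11 0 46155 46155 (by norm_num) (by norm_num)
      (by norm_num) (by norm_num) t_ge_4.2.2.1 t_ge_4.2.2.2
  have t5 : cnt tRows 5 (14 - 5) = 3282 :=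
    cnt_of_ge 0 tRows tRows_lt rfl 14 5 9 10 3282 278256 274974 (by norm_num) (by norm_num)
      (by norm_num) (by norm_num) t_ge_5.2.2.1 t_ge_5.2.2.2
  have t6 : cnt tRows 6 (14 - 6) = 0 :=
    cnt_of_ge 6 tRows tRows_lt rfl 14 6 8 9 0 1344180 1344180 (by norm_num) (by norm_num)
      (by norm_num) (by norm_num) t_ge_6.1 t_ge_6.2
  have em := sum_8 (fun a => cnt mRows a (14 - a)) _ _ _ _ _ _ _ _
    m0 m1 m2 m3 m4 m5 m6 m7
  have et := sum_7 (fun a => cnt tRows a (14 - a)) _ _ _ _ _ _ _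
    t0 t1 t2 t3 t4 t5 t6
  have e := card_total 14 8 7 (by norm_num) (by norm_num)
  rw [em, et] at e
  exact (ncard_code 14).trans e

theorem min_m (x : Fin 34 → ZMod 2) (h1 : 1 ≤ hammingNorm x) (h5 : hammingNorm x ≤ 5) :
    12 ≤ hammingNorm x + hammingNorm (vm mRows x) := by
  obtain ⟨k, hk⟩ : ∃ k, hammingNorm x = k := ⟨_, rfl⟩
  rw [hk] at h1 h5
  interval_cases k
  · have := min_of_ge 0 mRows mRows_lt rfl 1 11 (by norm_num) (m_ge_1.1.trans (by decide)) x hk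
    omega
  · have := min_of_ge 0 mRows mRows_lt rfl 2 10 (by norm_num) (m_ge_2.1.trans (by decide)) x hk
    omega
  · have := min_of_ge 0 mRows mRows_lt rfl 3 9 (by norm_num) (m_ge_3.1.trans (by decide)) x hk
    omega
  · have := min_of_ge 0 mRows mRows_lt rfl 4 8 (by norm_num) (m_ge_4.1.trans (by decide)) x hk
    omega
  · have := min_of_ge 0 mRows mRows_lt rfl 5 7 (by norm_num) (m_ge_5.1.trans (by decide)) x hk
    omega

theorem min_t (x : Fin 34 → ZMod 2) (h1 : 1 ≤ hammingNorm x) (h5 : hammingNorm x ≤ 5) :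
    12 ≤ hammingNorm x + hammingNorm (vm tRows x) := by
  obtain ⟨k, hk⟩ : ∃ k, hammingNorm x = k := ⟨_, rfl⟩
  rw [hk] at h1 h5
  interval_cases k
  · have := min_of_ge 0 tRows tRows_lt rfl 1 11 (by norm_num) (t_ge_1.1.trans (by decide)) x hk
    omega
  · have := min_of_ge 0 tRows tRows_lt rfl 2 10 (by norm_num) (t_ge_2.1.trans (by decide)) x hk
    omega
  · have := min_of_ge 0 tRows tRows_lt rfl 3 9 (by norm_num) (t_ge_3.1.trans (by decide)) x hk
    omega
  · have := min_of_ge 0 tRows tRows_lt rfl 4 8 (by norm_num) (t_ge_4.1.trans (by decide)) x hk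
    omega
  · have := min_of_ge 0 tRows tRows_lt rfl 5 7 (by norm_num) (t_ge_5.1.trans (by decide)) x hk
    omega

theorem code_min (v : Fin 68 → ZMod 2) (hv : v ∈ theCode) (h0 : v ≠ 0) : 12 ≤ hammingNorm v := by
  rw [mem_code] at hv
  by_contra hlt
  rw [norm_halves] at hlt
  have hx : lft v = vm tRows (rgt v) := by rw [hv, vm_tm]
  have hl0 : lft v ≠ 0 := by
    intro h
    apply h0
    have h2 : rgt v = 0 := by
      rw [hv, h]
      funext j
      simp [vm]
    rw [← glue_halves v, h, h2]
    funext i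
    refine Fin.addCases (m := 34) (n := 34) (fun i => ?_) (fun i => ?_) i
    · exact congrFun (lft_glue 0 0) i
    · exact congrFun (rgt_glue 0 0) i
  have hr0 : rgt v ≠ 0 := by
    intro h
    apply hl0
    rw [hx, h]
    funext j
    simp [vm]
  have p1 : 0 < hammingNorm (lft v) := hammingNorm_pos_iff.mpr hl0
  have p2 : 0 < hammingNorm (rgt v) := hammingNorm_pos_iff.mpr hr0
  by_cases h5 : hammingNorm (lft v) ≤ 5
  · have := min_m (lft v) p1 h5
    rw [← hv] at this
    omega
  · have := min_t (rgt v) p2 (by omega)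
    rw [← hx] at this
    omega

/-- There exists a binary self-dual `[68, 34, 12]` code with weight enumerator
`W_{68,2}` (γ = 0, β = 208): minimum nonzero weight 12, exactly 1274 codewords of weight 12
and exactly 13296 codewords of weight 14. -/
theorem exists_selfDual_68_18 :
    ∃ C : Submodule (ZMod 2) (Fin 68 → ZMod 2),
      IsSelfDual C ∧
      (∀ v ∈ C, v ≠ 0 → 12 ≤ hammingNorm v) ∧
      (∃ v ∈ C, hammingNorm v = 12) ∧
      {v | v ∈ C ∧ hammingNorm v = 12}.ncard = 1274 ∧
      {v | v ∈ C ∧ hammingNorm v = 14}.ncard = 13296 := by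
  refine ⟨theCode, code_selfDual, code_min, ?_, card_12, card_14⟩
  have h : {v | v ∈ theCode ∧ hammingNorm v = 12}.ncard ≠ 0 := by
    rw [card_12]
    norm_num
  obtain ⟨v, hv⟩ := Set.nonempty_of_ncard_ne_zero h
  exact ⟨v, hv.1, hv.2⟩
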